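/- Let λ ∈ ℝ, let Γ : ℝ² → ℝ be smooth, and let Φ = (φ1, φ2, φ3) : ℝ² → ℝ³ be smooth with φ2 nowhere vanishing, satisfying ∂ₓφ1 = λ m1 φ2 + φ3, ∂ₓφ2 = λ n1 φ1 + λ m2 φ3, ∂ₓφ3 = φ1 + λ n2 φ2, together with ∂ₜΦ = Ṽ Φ where Ṽ = −λ Γ · [[0, m1, 0], [n1, 0, m2], [0, n2, 0]]. Set a = φ1/φ2, b = φ3/φ2 and ρ = λ n1 a + λ m2 b. Then ρ satisfies the local conservation law ∂ₜρ + ∂ₓ(Γ ρ) = 0 identically on ℝ². -/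

import Mathlib

/-!
The second components of the two linear systems give `ρ = ∂ₓφ2 / φ2` and
`∂ₜφ2 = -Γ ∂ₓφ2`, so that `Γ ρ = -∂ₜφ2 / φ2`. Thus `ρ = ∂ₓ log |φ2|` and `-Γ ρ = ∂ₜ log |φ2|`, and
the conservation law is the equality of the mixed partial derivatives of `log |φ2|`. The proof
avoids the logarithm: it applies the quotient rule and the symmetry of the mixed partials of `φ2`
itself (`pT_pX_comm`).
-/

/-- Partial derivative with respect to the first (space) variable. -/
noncomputable def pX (f : ℝ × ℝ → ℝ) : ℝ × ℝ → ℝ :=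
  fun p => deriv (fun x => f (x, p.2)) p.1

/-- Partial derivative with respect to the second (time) variable. -/
noncomputable def pT (f : ℝ × ℝ → ℝ) : ℝ × ℝ → ℝ :=
  fun p => deriv (fun t => f (p.1, t)) p.2

lemma hasDerivAt_pX {f : ℝ × ℝ → ℝ} (hf : Differentiable ℝ f) (p : ℝ × ℝ) :
    HasDerivAt (fun x => f (x, p.2)) (fderiv ℝ f p (1, 0)) p.1 :=
  (hf p).hasFDerivAt.comp_hasDerivAt p.1 ((hasDerivAt_id p.1).prodMk (hasDerivAt_const p.1 p.2))

lemma hasDerivAt_pT {f : ℝ × ℝ → ℝ} (hf : Differentiable ℝ f) (p : ℝ × ℝ) :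
    HasDerivAt (fun t => f (p.1, t)) (fderiv ℝ f p (0, 1)) p.2 :=
  (hf p).hasFDerivAt.comp_hasDerivAt p.2 ((hasDerivAt_const p.2 p.1).prodMk (hasDerivAt_id p.2))

lemma pX_eq_fderiv {f : ℝ × ℝ → ℝ} (hf : Differentiable ℝ f) :
    pX f = fun p => fderiv ℝ f p (1, 0) :=
  funext fun p => (hasDerivAt_pX hf p).deriv

lemma pT_eq_fderiv {f : ℝ × ℝ → ℝ} (hf : Differentiable ℝ f) :
    pT f = fun p => fderiv ℝ f p (0, 1) :=
  funext fun p => (hasDerivAt_pT hf p).deriv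

lemma differentiable_fderiv_of_contDiff_two {f : ℝ × ℝ → ℝ} (hf : ContDiff ℝ 2 f) :
    Differentiable ℝ (fderiv ℝ f) :=
  (hf.fderiv_right (m := 1) (by norm_num)).differentiable (by norm_num)

lemma differentiable_pX {f : ℝ × ℝ → ℝ} (hf : ContDiff ℝ 2 f) : Differentiable ℝ (pX f) := by
  rw [pX_eq_fderiv (hf.differentiable (by norm_num))]
  exact (differentiable_fderiv_of_contDiff_two hf).clm_apply (differentiable_const _)

lemma differentiable_pT {f : ℝ × ℝ → ℝ} (hf : ContDiff ℝ 2 f) : Differentiable ℝ (pT f) := by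
  rw [pT_eq_fderiv (hf.differentiable (by norm_num))]
  exact (differentiable_fderiv_of_contDiff_two hf).clm_apply (differentiable_const _)

lemma pT_pX_comm {f : ℝ × ℝ → ℝ} (hf : ContDiff ℝ 2 f) (p : ℝ × ℝ) :
    pT (pX f) p = pX (pT f) p := by
  have hd := hf.differentiable (by norm_num)
  have hdd := differentiable_fderiv_of_contDiff_two hf p
  have hsymm : IsSymmSndFDerivAt ℝ f p := hf.contDiffAt.isSymmSndFDerivAt (by simp)
  rw [pT_eq_fderiv (differentiable_pX hf), pX_eq_fderiv (differentiable_pT hf),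
    pX_eq_fderiv hd, pT_eq_fderiv hd]
  simp only
  rw [fderiv_clm_apply hdd (differentiableAt_const _),
    fderiv_clm_apply hdd (differentiableAt_const _)]
  simpa using hsymm.eq (0, 1) (1, 0)

lemma pX_div {f g : ℝ × ℝ → ℝ} (hf : Differentiable ℝ f) (hg : Differentiable ℝ g)
    (p : ℝ × ℝ) (hp : g p ≠ 0) :
    pX (fun q => f q / g q) p = (pX f p * g p - f p * pX g p) / g p ^ 2 := by
  rw [pX_eq_fderiv hf, pX_eq_fderiv hg]
  exact ((hasDerivAt_pX hf p).div (hasDerivAt_pX hg p) hp).deriv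

lemma pT_div {f g : ℝ × ℝ → ℝ} (hf : Differentiable ℝ f) (hg : Differentiable ℝ g)
    (p : ℝ × ℝ) (hp : g p ≠ 0) :
    pT (fun q => f q / g q) p = (pT f p * g p - f p * pT g p) / g p ^ 2 := by
  rw [pT_eq_fderiv hf, pT_eq_fderiv hg]
  exact ((hasDerivAt_pT hf p).div (hasDerivAt_pT hg p) hp).deriv

theorem stmt_12
    (m1 m2 n1 n2 Γ : ℝ × ℝ → ℝ)
    (hm1 : ContDiff ℝ (⊤ : ℕ∞) m1) (hm2 : ContDiff ℝ (⊤ : ℕ∞) m2)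
    (hn1 : ContDiff ℝ (⊤ : ℕ∞) n1) (hn2 : ContDiff ℝ (⊤ : ℕ∞) n2)
    (hΓ : ContDiff ℝ (⊤ : ℕ∞) Γ)
    (lam : ℝ)
    (W : ℝ × ℝ → Matrix (Fin 3) (Fin 3) ℝ)
    (hW : W = fun p => (-lam * Γ p) • !![0, m1 p, 0;
                                         n1 p, 0, m2 p;
                                         0, n2 p, 0])
    (φ1 φ2 φ3 : ℝ × ℝ → ℝ)
    (hφ1 : ContDiff ℝ (⊤ : ℕ∞) φ1) (hφ2 : ContDiff ℝ (⊤ : ℕ∞) φ2) (hφ3 : ContDiff ℝ (⊤ : ℕ∞) φ3)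
    (hφ2ne : ∀ p : ℝ × ℝ, φ2 p ≠ 0)
    (hx1 : ∀ p : ℝ × ℝ, pX φ1 p = lam * m1 p * φ2 p + φ3 p)
    (hx2 : ∀ p : ℝ × ℝ, pX φ2 p = lam * n1 p * φ1 p + lam * m2 p * φ3 p)
    (hx3 : ∀ p : ℝ × ℝ, pX φ3 p = φ1 p + lam * n2 p * φ2 p)
    (ht1 : ∀ p : ℝ × ℝ, pT φ1 p = W p 0 0 * φ1 p + W p 0 1 * φ2 p + W p 0 2 * φ3 p)
    (ht2 : ∀ p : ℝ × ℝ, pT φ2 p = W p 1 0 * φ1 p + W p 1 1 * φ2 p + W p 1 2 * φ3 p)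
    (ht3 : ∀ p : ℝ × ℝ, pT φ3 p = W p 2 0 * φ1 p + W p 2 1 * φ2 p + W p 2 2 * φ3 p)
    (a b ρ : ℝ × ℝ → ℝ)
    (ha : a = fun p => φ1 p / φ2 p)
    (hb : b = fun p => φ3 p / φ2 p)
    (hρ : ρ = fun p => lam * n1 p * a p + lam * m2 p * b p) :
    ∀ p : ℝ × ℝ, pT ρ p + pX (fun q => Γ q * ρ q) p = 0 := by
  intro p
  have h2 : ContDiff ℝ 2 φ2 := contDiff_infty.1 hφ2 2
  have hd : Differentiable ℝ φ2 := h2.differentiable (by norm_num)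
  have hρ' : ρ = fun q => pX φ2 q / φ2 q := by
    funext q
    have := hφ2ne q
    simp only [hρ, ha, hb, hx2]
    field_simp
  have hT : ∀ q, pT φ2 q = -(Γ q * pX φ2 q) := by
    intro q
    rw [ht2, hx2, hW]
    simp
    ring
  have hΓρ : (fun q => Γ q * ρ q) = fun q => -pT φ2 q / φ2 q := by
    funext q
    rw [hρ', hT]
    ring
  have hneg : pX (fun q => -pT φ2 q) p = -pX (pT φ2) p := by
    simp only [pX, deriv.fun_neg]
  rw [hΓρ, hρ', pT_div (differentiable_pX h2) hd p (hφ2ne p),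
    pX_div (differentiable_pT h2).fun_neg hd p (hφ2ne p), hneg, pT_pX_comm h2]
  ring
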